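/- There are no self-dual synchronized Tamari intervals of even size, and for k ≥ 0 the number of self-dual synchronized Tamari intervals of size 2k+1 equals (1/(k+1)) · C(3k+1, k). -/

import Mathlib

/-- Binary trees: a leaf or a binary node with two subtrees. -/
inductive BT : Type
  | leaf : BT
  | node : BT → BT → BT

namespace BT

/-- Number of binary (internal) nodes. -/
def size : BT → ℕ
  | leaf => 0
  | node l r => l.size + r.size + 1

/-- One right rotation somewhere in the tree: ((A,B),C) ↦ (A,(B,C)). -/
inductive Rot : BT → BT → Prop
  | rotate (A B C : BT) : Rot (node (node A B) C) (node A (node B C))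
  | left {l l' : BT} (r : BT) : Rot l l' → Rot (node l r) (node l' r)
  | right (l : BT) {r r' : BT} : Rot r r' → Rot (node l r) (node l r')

/-- Tamari order: reflexive-transitive closure of right rotation. -/
def tle (T T' : BT) : Prop := Relation.ReflTransGen Rot T T'

/-- Bracket-vector: sizes of right subtrees of nodes, in infix order. -/
def bracket : BT → List ℕ
  | leaf => []
  | node l r => bracket l ++ r.size :: bracket r

/-- Dual bracket-vector: sizes of left subtrees of nodes, in infix order. -/
def dualBracket : BT → List ℕ
  | leaf => []
  | node l r => dualBracket l ++ l.size :: dualBracket r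

/-- Canopy word: for each leaf (left to right), 1 if it is a left child, 0 if a right child;
the argument `b` is the value assigned to the tree if it is itself a leaf. -/
def canopyAux (b : ℕ) : BT → List ℕ
  | leaf => [b]
  | node l r => canopyAux 1 l ++ canopyAux 0 r

/-- Canopy-vector of a binary tree. -/
def canopy (T : BT) : List ℕ := canopyAux 1 T

/-- Left-right mirror. -/
def mir : BT → BT
  | leaf => leaf
  | node l r => node (mir r) (mir l)

/-- Tamari interval of size n. -/
def interval (p : BT × BT) (n : ℕ) : Prop :=
  p.1.size = n ∧ p.2.size = n ∧ tle p.1 p.2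

/-- Tamari interval (of unspecified size). -/
def isInt (p : BT × BT) : Prop := p.1.size = p.2.size ∧ tle p.1 p.2

/-- The rise operation (T,T') ↦ ((T,ε),(ε,T')). -/
def riseF (p : BT × BT) : BT × BT := (node p.1 leaf, node leaf p.2)

/-- An interval is modern when its rise is again an interval. -/
def modern (p : BT × BT) : Prop := tle (node p.1 leaf) (node leaf p.2)

/-- Infinitely modern: every iterated rise is an interval. -/
def infModern (p : BT × BT) : Prop :=
  ∀ k : ℕ, tle ((riseF^[k] p).1) ((riseF^[k] p).2)

/-- Synchronized: equal canopies. -/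
def synced (p : BT × BT) : Prop := canopy p.1 = canopy p.2

/-- Self-dual: equal to its dual (mir T', mir T). -/
def selfDual (p : BT × BT) : Prop := mir p.2 = p.1 ∧ mir p.1 = p.2

/-- Number of positions where the two canopies agree. -/
def agreeCount (p : BT × BT) : ℕ :=
  ((List.range (p.1.size + 1)).filter
    (fun i => (canopy p.1).getD i 0 == (canopy p.2).getD i 0)).length

/-- Number of canopy positions of joint type (a on top, b on bottom), for an interval (T,T')
with T' the upper tree. -/
def typeCount (a b : ℕ) (p : BT × BT) : ℕ :=
  ((List.range (p.1.size + 1)).filter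
    (fun i => ((canopy p.2).getD i 0 == a) && ((canopy p.1).getD i 0 == b))).length

end BT

/-!
A lower bound of `node A' M'` in the Tamari order is obtained by choosing `A ≤ A'` and `M ≤ M'` and
grafting `A` somewhere on the left branch of `M`; the canopies agree precisely when they agree for
`(A, A')` and `(M, M')` and the graft is not at the end of a nonempty left branch. Counting the
length of the left branch by a catalytic variable `u`, this decomposition gives the equation
`(u - 1) (W - 1) = x u W (u - 1 + W - W(1))` for the generating function `W` of synchronized
intervals.

A self-dual interval is determined by its lower tree `node L R`. Either `(L, mir R)` is a
synchronized interval, or `L` is a graft of `A` to the lower tree of a smaller self-dual interval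
and `(A, mir R)` is a synchronized interval. Hence sizes of nonempty self-dual intervals are odd,
and with `x` counting half the size,
`(u - 1) F = u (u - 1) W + x u ^ 2 W (F - F(1))`.

The quadratic method yields a series `U = 1 + x U ^ 3` with `W(U) = U`. The same substitution
`u = U` cancels the coefficient of `F` in the second equation, which leaves `F(1) = U ^ 2`, and the
coefficients of powers of `U` are given by binomial coefficients.
-/

open PowerSeries Finset
open scoped Polynomial

section GenFun

variable {α β R : Type*}

/-- A size function on a combinatorial class is admissible when there are finitely many objects of
each size. -/
def FiniteFibers (size : α → ℕ) : Prop := ∀ n, (size ⁻¹' {n}).Finite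

/-- The weighted generating function `∑ weight a * X ^ size a` of a combinatorial class. The
coefficients are finite sums, so this is meaningful only if `size` satisfies `FiniteFibers`. -/
noncomputable def genFun [Semiring R] (size : α → ℕ) (weight : α → R) : R⟦X⟧ :=
  PowerSeries.mk fun n => ∑ᶠ a ∈ size ⁻¹' {n}, weight a

namespace FiniteFibers

variable {s : α → ℕ} {t : β → ℕ}

theorem of_finite [Finite α] (s : α → ℕ) : FiniteFibers s := fun _ => Set.toFinite _

theorem preimage_Iic (hs : FiniteFibers s) (n : ℕ) : (s ⁻¹' Set.Iic n).Finite :=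
  (Set.finite_Iic n).preimage' fun i _ => hs i

theorem sum (hs : FiniteFibers s) (ht : FiniteFibers t) : FiniteFibers (Sum.elim s t) := fun n => by
  rw [Set.preimage_sumElim]
  exact ((hs n).image _).union ((ht n).image _)

theorem prod (hs : FiniteFibers s) (ht : FiniteFibers t) :
    FiniteFibers fun x : α × β => s x.1 + t x.2 := fun n =>
  ((hs.preimage_Iic n).prod (ht.preimage_Iic n)).subset fun x (hx : s x.1 + t x.2 = n) =>
    ⟨show s x.1 ≤ n by omega, show t x.2 ≤ n by omega⟩

theorem sigma {γ : α → Type*} [∀ a, Finite (γ a)] (hs : FiniteFibers s) :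
    FiniteFibers fun x : Σ a, γ a => s x.1 := fun n => by
  refine ((hs n).biUnion fun a _ => Set.finite_range (Sigma.mk a)).subset fun x hx => ?_
  exact Set.mem_biUnion hx ⟨x.2, rfl⟩

theorem add_one (hs : FiniteFibers s) : FiniteFibers fun a => s a + 1 := fun n =>
  (hs.preimage_Iic n).subset fun a (ha : s a + 1 = n) => show s a ≤ n by omega

end FiniteFibers

theorem coeff_genFun [Semiring R] (s : α → ℕ) (w : α → R) (n : ℕ) :
    coeff n (genFun s w) = ∑ᶠ a ∈ s ⁻¹' {n}, w a := coeff_mk _ _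

theorem coeff_genFun_one [Semiring R] {s : α → ℕ} (hs : FiniteFibers s) (n : ℕ) :
    coeff n (genFun s fun _ => (1 : R)) = (s ⁻¹' {n}).ncard := by
  rw [coeff_genFun, finsum_mem_eq_finite_toFinset_sum _ (hs n), Finset.sum_const, nsmul_one,
    Set.ncard_eq_toFinset_card _ (hs n)]

theorem genFun_eq_of_bijective [Semiring R] {s : α → ℕ} {t : β → ℕ} {v : α → R} {w : β → R}
    (e : α → β) (he : e.Bijective) (hsize : ∀ a, t (e a) = s a) (hweight : ∀ a, w (e a) = v a) :
    genFun t w = genFun s v := by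
  ext n
  rw [coeff_genFun, coeff_genFun]
  refine (finsum_mem_eq_of_bijOn e ⟨fun a ha => ?_, he.injective.injOn, fun b hb => ?_⟩
    fun a _ => (hweight a).symm).symm
  · exact (hsize a).trans ha
  · obtain ⟨a, rfl⟩ := he.surjective b
    exact ⟨a, (hsize a).symm.trans hb, rfl⟩

theorem genFun_unique [Semiring R] [Unique α] (w : α → R) :
    genFun (fun _ => 0) w = C (w default) := by
  ext n
  rw [coeff_genFun, coeff_C]
  rcases eq_or_ne n 0 with rfl | hn
  · simp [finsum_unique]
  · simp [hn, hn.symm]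

theorem genFun_sum [Semiring R] {s : α → ℕ} {t : β → ℕ} (hs : FiniteFibers s)
    (ht : FiniteFibers t) (v : α → R) (w : β → R) :
    genFun (Sum.elim s t) (Sum.elim v w) = genFun s v + genFun t w := by
  ext n
  rw [map_add, coeff_genFun, coeff_genFun, coeff_genFun, Set.preimage_sumElim,
    finsum_mem_union (Set.disjoint_image_inl_image_inr) ((hs n).image _) ((ht n).image _),
    finsum_mem_image Sum.inl_injective.injOn, finsum_mem_image Sum.inr_injective.injOn]
  simp only [Sum.elim_inl, Sum.elim_inr]

theorem genFun_prod [CommSemiring R] {s : α → ℕ} {t : β → ℕ} (hs : FiniteFibers s)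
    (ht : FiniteFibers t) (v : α → R) (w : β → R) :
    genFun (fun x : α × β => s x.1 + t x.2) (fun x => v x.1 * w x.2) =
      genFun s v * genFun t w := by
  ext n
  simp only [coeff_mul, coeff_genFun, finsum_mem_eq_finite_toFinset_sum _ (hs _),
    finsum_mem_eq_finite_toFinset_sum _ (ht _),
    finsum_mem_eq_finite_toFinset_sum _ (hs.prod ht _), Finset.sum_mul_sum, ← Finset.sum_product']
  classical
  rw [← Finset.sum_fiberwise_of_maps_to (t := antidiagonal n) (g := fun x => (s x.1, t x.2))
    (by simp)]
  refine Finset.sum_congr rfl fun ij hij => Finset.sum_congr ?_ fun _ _ => rfl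
  ext x
  rw [HasAntidiagonal.mem_antidiagonal] at hij
  simp only [mem_filter, mem_product, Set.Finite.mem_toFinset, Set.mem_preimage,
    Set.mem_singleton_iff, Prod.ext_iff]
  omega

theorem genFun_sigma [Semiring R] {γ : α → Type*} [∀ a, Fintype (γ a)] {s : α → ℕ}
    (hs : FiniteFibers s) (w : ∀ a, γ a → R) :
    genFun (fun x : Σ a, γ a => s x.1) (fun x => w x.1 x.2) = genFun s fun a => ∑ i, w a i := by
  ext n
  rw [coeff_genFun, coeff_genFun, finsum_mem_eq_finite_toFinset_sum _ (hs n),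
    finsum_mem_eq_finite_toFinset_sum _ (hs.sigma n), Finset.sum_sigma']
  refine Finset.sum_congr ?_ fun _ _ => rfl
  ext x
  simp

theorem genFun_add_one [Semiring R] (s : α → ℕ) (w : α → R) :
    genFun (fun a => s a + 1) w = X * genFun s w := by
  ext n
  cases n with
  | zero => simp [coeff_genFun]
  | succ n => rw [coeff_succ_X_mul, coeff_genFun, coeff_genFun]; simp

theorem genFun_map {S : Type*} [Semiring R] [Semiring S] {s : α → ℕ} (hs : FiniteFibers s)
    (f : R →+* S) (w : α → R) : (genFun s w).map f = genFun s fun a => f (w a) := by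
  ext n
  simp only [coeff_map, coeff_genFun]
  exact f.toAddMonoidHom.map_finsum_mem _ (hs n)

theorem genFun_C_mul [Semiring R] {s : α → ℕ} (hs : FiniteFibers s) (c : R) (w : α → R) :
    genFun s (fun a => c * w a) = C c * genFun s w := by
  ext n
  rw [coeff_C_mul, coeff_genFun, coeff_genFun]
  exact ((AddMonoidHom.mulLeft c).map_finsum_mem _ (hs n)).symm

theorem genFun_sub [Ring R] {s : α → ℕ} (hs : FiniteFibers s) (v w : α → R) :
    genFun s (fun a => v a - w a) = genFun s v - genFun s w := by
  ext n
  simp only [map_sub, coeff_genFun]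
  exact finsum_mem_sub_distrib _ _ (hs n)

theorem sub_one_mul_genFun_sigma_fin [Ring R] {s : α → ℕ} (hs : FiniteFibers s) (l : α → ℕ)
    (u : R) :
    (C u - 1) * genFun (fun x : Σ a, Fin (l a) => s x.1) (fun x => u ^ (x.2 : ℕ)) =
      genFun s (fun a => u ^ l a) - genFun s fun _ => 1 := by
  rw [genFun_sigma hs fun a (i : Fin (l a)) => u ^ (i : ℕ), ← map_one C, ← map_sub,
    ← genFun_C_mul hs, ← genFun_sub hs]
  simp only [Fin.sum_univ_eq_sum_range (u ^ ·), mul_geom_sum]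

end GenFun

section PowerSeries

variable {R : Type*}

theorem coeff_pow_of_eq_one_add_X_mul_pow [CommRing R] [IsDomain R] [CharZero R] {U : R⟦X⟧} {p : ℕ}
    (hp : p ≠ 0) (hU : U = 1 + X * U ^ p) (k r : ℕ) :
    ((p * k + r : ℕ) : R) * coeff k (U ^ r) = r * (p * k + r).choose k := by
  induction k generalizing r with
  | zero =>
    have hU₀ : constantCoeff U = 1 := by rw [hU]; simp
    simp [hU₀]
  | succ k ihk =>
    induction r with
    | zero => simp [coeff_one]
    | succ r ihr =>
      have hrec : coeff (k + 1) (U ^ (r + 1)) = coeff (k + 1) (U ^ r) + coeff k (U ^ (r + p)) := by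
        rw [← coeff_succ_X_mul k, ← map_add, pow_succ]
        nth_rw 2 [hU]
        ring_nf
      have ihk' := ihk (r + p)
      rw [show p * k + (r + p) = p * (k + 1) + r by ring] at ihk'
      rw [hrec, ← add_assoc]
      have hkN : k ≤ p * (k + 1) + r := by nlinarith [Nat.pos_of_ne_zero hp]
      have hN : (p * (k + 1) + r : ℕ) = (p : R) * (k + 1) + r := by push_cast; ring
      have hN₀ : p * (k + 1) + r ≠ 0 := by positivity
      generalize p * (k + 1) + r = N at *
      have habsorb : (N.choose (k + 1) : R) * (k + 1) = N.choose k * (N - k) := by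
        rw [← Nat.cast_sub hkN]
        exact_mod_cast N.choose_succ_right_eq k
      have hcancel : (N : R) * (k + 1) ≠ 0 :=
        mul_ne_zero (by exact_mod_cast hN₀) (by exact_mod_cast k.succ_ne_zero)
      refine mul_left_cancel₀ hcancel ?_
      rw [Nat.choose_succ_succ]
      push_cast at ihr ihk' ⊢
      linear_combination (N + 1) * (k + 1) * (ihr + ihk') + (r - N : R) * habsorb -
        (N + 1 : R) * N.choose k * hN

theorem succ_mul_coeff_sq_of_eq_one_add_X_mul_cube [CommRing R] [IsDomain R] [CharZero R]
    {U : R⟦X⟧} (hU : U = 1 + X * U ^ 3) (k : ℕ) :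
    ((k : R) + 1) * coeff k (U ^ 2) = (3 * k + 1).choose k := by
  have h := coeff_pow_of_eq_one_add_X_mul_pow three_ne_zero hU k 2
  have hchoose : (3 * k + 1 + 1) * (3 * k + 1).choose k = (3 * k + 2).choose k * (2 * (k + 1)) := by
    rw [mul_comm, Nat.choose_mul_succ_eq]
    congr 1
    omega
  refine mul_left_cancel₀ (a := ((3 * k + 2 : ℕ) : R) * 2) ?_ ?_
  · exact mul_ne_zero (Nat.cast_ne_zero.2 (by omega)) two_ne_zero
  · have hchoose' := congrArg (Nat.cast (R := R)) hchoose
    push_cast at h hchoose' ⊢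
    linear_combination 2 * ((k : R) + 1) * h - 2 * hchoose'

theorem exists_isFixedPt_of_X_pow_dvd [CommRing R] {Φ : R⟦X⟧ → R⟦X⟧}
    (hΦ : ∀ n U V, X ^ n ∣ U - V → X ^ (n + 1) ∣ Φ U - Φ V) : ∃ U, Function.IsFixedPt Φ U := by
  have hiter (n m : ℕ) : X ^ n ∣ Φ^[n] 0 - Φ^[n + m] 0 := by
    induction n with
    | zero => simp
    | succ n ih =>
      rw [Nat.add_right_comm]
      simpa only [Function.iterate_succ_apply'] using hΦ n _ _ ih
  let U : R⟦X⟧ := mk fun n => coeff n (Φ^[n + 1] 0)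
  have hU (n : ℕ) : X ^ n ∣ U - Φ^[n] 0 := by
    refine X_pow_dvd_iff.2 fun m hm => ?_
    obtain ⟨d, rfl⟩ := Nat.exists_eq_add_of_lt hm
    have h := X_pow_dvd_iff.1 (hiter (m + 1) d) m m.lt_succ_self
    rw [Nat.add_right_comm, map_sub] at h
    rwa [map_sub, coeff_mk]
  refine ⟨U, sub_eq_zero.1 <| PowerSeries.ext fun n => ?_⟩
  have h := (hΦ n U _ (hU n)).sub (hU (n + 1))
  rw [Function.iterate_succ_apply', sub_sub_sub_cancel_right] at h
  exact X_pow_dvd_iff.1 h n n.lt_succ_self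

/-- Application of a derivation of the coefficient ring to every coefficient of a power series. -/
noncomputable def coeffDerivation {A : Type*} [CommRing R] [CommRing A] [Algebra R A]
    (d : Derivation R A A) : Derivation R A⟦X⟧ A⟦X⟧ :=
  Derivation.mk'
    { toFun f := mk fun n => d (coeff n f)
      map_add' f g := by ext n; simp
      map_smul' c f := by ext n; simp }
    fun f g => by
      ext n
      simp only [LinearMap.coe_mk, AddHom.coe_mk, coeff_mk, smul_eq_mul, map_add, coeff_mul,
        map_sum, Derivation.leibniz, sum_add_distrib]
      rw [add_right_inj, ← Finset.Nat.sum_antidiagonal_swap]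
      rfl

section

variable {A : Type*} [CommRing R] [CommRing A] [Algebra R A] (d : Derivation R A A)

theorem coeff_coeffDerivation (f : A⟦X⟧) (n : ℕ) :
    coeff n (coeffDerivation d f) = d (coeff n f) := coeff_mk _ fun n => d (coeff n f)

theorem coeffDerivation_C (a : A) : coeffDerivation d (C a) = C (d a) := by
  ext n
  rw [coeff_coeffDerivation, coeff_C, coeff_C, apply_ite d, map_zero]

theorem coeffDerivation_X : coeffDerivation d (X : A⟦X⟧) = 0 := by
  ext n
  rw [coeff_coeffDerivation, coeff_X, apply_ite d, d.map_one_eq_zero, map_zero, ite_self, map_zero]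

theorem coeffDerivation_map_algebraMap (f : R⟦X⟧) :
    coeffDerivation d (f.map (algebraMap R A)) = 0 := by
  ext n
  rw [coeff_coeffDerivation, coeff_map, d.map_algebraMap, map_zero]

end

end PowerSeries

section Catalytic

variable {R : Type*} [CommRing R]

/-- Substitution of the power series `U` for the catalytic variable, that is, for the polynomial
variable of the coefficients of `f : R[X]⟦X⟧`. -/
noncomputable def evalCatalytic (U : R⟦X⟧) : R[X]⟦X⟧ →+* R⟦X⟧ where
  toFun f := .mk fun n => ∑ ij ∈ antidiagonal n, coeff ij.2 (Polynomial.aeval U (coeff ij.1 f))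
  map_zero' := by ext n; simp
  map_add' f g := by ext n; simp [sum_add_distrib]
  map_one' := by
    ext n
    rw [coeff_mk, Finset.Nat.sum_antidiagonal_eq_sum_range_succ_mk, sum_range_succ']
    simp [coeff_one]
  map_mul' f g := by
    ext n
    simp only [coeff_mk, coeff_mul, map_sum, map_mul, sum_mul_sum, sum_sigma']
    refine sum_bij'
      (fun x _ => ⟨(x.2.1.1 + x.2.2.1, x.2.1.2 + x.2.2.2),
        ⟨(x.2.1.1, x.2.2.1), (x.2.1.2, x.2.2.2)⟩⟩)
      (fun x _ => ⟨(x.2.1.1 + x.2.2.1, x.2.1.2 + x.2.2.2),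
        ⟨(x.2.1.1, x.2.2.1), (x.2.1.2, x.2.2.2)⟩⟩)
      ?_ ?_ ?_ ?_ ?_
    all_goals grind [HasAntidiagonal.mem_antidiagonal]

theorem coeff_evalCatalytic (U : R⟦X⟧) (f : R[X]⟦X⟧) (n : ℕ) :
    coeff n (evalCatalytic U f) =
      ∑ ij ∈ antidiagonal n, coeff ij.2 (Polynomial.aeval U (coeff ij.1 f)) := by
  rw [evalCatalytic, RingHom.coe_mk, MonoidHom.coe_mk, OneHom.coe_mk, coeff_mk]

theorem evalCatalytic_C (U : R⟦X⟧) (p : R[X]) :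
    evalCatalytic U (C p) = Polynomial.aeval U p := by
  ext n
  rw [coeff_evalCatalytic, Finset.Nat.sum_antidiagonal_eq_sum_range_succ_mk, sum_range_succ']
  simp [coeff_C]

theorem evalCatalytic_map_C (U f : R⟦X⟧) : evalCatalytic U (f.map Polynomial.C) = f := by
  ext n
  rw [coeff_evalCatalytic, Finset.Nat.sum_antidiagonal_eq_sum_range_succ_mk, sum_range_succ]
  refine (add_eq_right.2 <| sum_eq_zero fun i hi => ?_).trans ?_
  · rw [coeff_map, Polynomial.aeval_C]
    exact coeff_C_of_ne_zero (Nat.sub_ne_zero_of_lt (mem_range.1 hi))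
  · simp

theorem evalCatalytic_X (U : R⟦X⟧) : evalCatalytic U X = X := by
  simpa using evalCatalytic_map_C U X

theorem X_pow_dvd_evalCatalytic_sub {U V : R⟦X⟧} {n : ℕ} (h : X ^ n ∣ U - V) (f : R[X]⟦X⟧) :
    X ^ n ∣ evalCatalytic U f - evalCatalytic V f := by
  refine X_pow_dvd_iff.2 fun m hm => ?_
  rw [map_sub, coeff_evalCatalytic, coeff_evalCatalytic, ← sum_sub_distrib]
  refine sum_eq_zero fun ij hij => ?_
  have hlt : ij.2 < n := (HasAntidiagonal.mem_antidiagonal.1 hij ▸ Nat.le_add_left ..).trans_lt hm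
  rw [← map_sub, Polynomial.aeval_def, Polynomial.aeval_def, Polynomial.eval₂_eq_eval_map,
    Polynomial.eval₂_eq_eval_map]
  exact X_pow_dvd_iff.1 (h.trans (Polynomial.sub_dvd_eval_sub ..)) _ hlt

/- The quadratic method: `U` is chosen so that the partial derivative of the equation with respect
to `W` vanishes at `u = U`. Differentiating the equation in `u` and then setting `u = U` therefore
eliminates the unknown derivative of `W`. -/
theorem exists_eq_one_add_X_mul_cube_of_catalytic {W : R[X]⟦X⟧} {W₁ : R⟦X⟧}
    (hW : (C Polynomial.X - 1) * (W - 1) =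
      X * C Polynomial.X * W * (C Polynomial.X - 1 + W - W₁.map Polynomial.C)) :
    ∃ U, U = 1 + X * U ^ 3 ∧ evalCatalytic U W = U := by
  obtain ⟨U, hU⟩ := exists_isFixedPt_of_X_pow_dvd
    (Φ := fun U => 1 + X * (U * (U - 1 + 2 * evalCatalytic U W - W₁))) fun n U V h => by
      rw [add_sub_add_left_eq_sub, ← mul_sub, pow_succ']
      refine mul_dvd_mul_left X ?_
      convert (h.mul_left (U + V - 1 + 2 * evalCatalytic U W - W₁)).add
        ((X_pow_dvd_evalCatalytic_sub h W).mul_left (2 * V)) using 1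
      ring
  generalize hw : evalCatalytic U W = w at hU
  have hcritical : U - 1 = X * U * (U - 1 + 2 * w - W₁) := by
    have := hU.eq
    rw [hw] at this
    linear_combination -this
  have heval : (U - 1) * (w - 1) = X * U * w * (U - 1 + w - W₁) := by
    simpa only [map_mul, map_sub, map_add, map_one, evalCatalytic_C, evalCatalytic_X,
      evalCatalytic_map_C, Polynomial.aeval_X, hw] using congrArg (evalCatalytic U) hW
  have hderiv : w - 1 = X * w * (U - 1 + w - W₁) + X * U * w := by
    have h := congrArg (fun f => evalCatalytic U (coeffDerivation Polynomial.derivative' f)) hW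
    have hW₁ : coeffDerivation Polynomial.derivative' (W₁.map Polynomial.C) = 0 :=
      coeffDerivation_map_algebraMap _ W₁
    simp only [Derivation.leibniz, Derivation.map_one_eq_zero, smul_eq_mul, map_mul, map_sub,
      map_add, map_one, map_zero, coeffDerivation_C, coeffDerivation_X, evalCatalytic_C,
      evalCatalytic_X, evalCatalytic_map_C, Polynomial.aeval_X, Polynomial.derivative'_apply,
      Polynomial.derivative_X, hw, hW₁] at h
    linear_combination h - evalCatalytic U (coeffDerivation Polynomial.derivative' W) * hcritical
  have hunit : IsUnit (1 - X * (U - 1 + w - W₁)) := by simp [isUnit_iff_constantCoeff]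
  obtain rfl : U = w := hunit.mul_left_injective <| by linear_combination hcritical - hderiv
  exact ⟨U, by linear_combination U * hderiv - heval, hw⟩

-- The substitution `u = U` cancels the coefficient `u - 1 - X * u ^ 2 * W` of `F`.
theorem eq_sq_of_catalytic {U F₁ : R⟦X⟧} {W F : R[X]⟦X⟧} (hU : U = 1 + X * U ^ 3)
    (hW : evalCatalytic U W = U)
    (hF : (C Polynomial.X - 1) * F = C Polynomial.X * (C Polynomial.X - 1) * W +
      X * C Polynomial.X ^ 2 * W * (F - F₁.map Polynomial.C)) :
    F₁ = U ^ 2 := by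
  have heval := congrArg (evalCatalytic U) hF
  simp only [map_mul, map_sub, map_add, map_pow, map_one, evalCatalytic_C, evalCatalytic_X,
    evalCatalytic_map_C, Polynomial.aeval_X, hW] at heval
  have hunit : IsUnit U := by rw [hU]; simp [isUnit_iff_constantCoeff]
  refine (hunit.pow 3).mul_left_injective (X_mul_injective ?_)
  linear_combination heval - (evalCatalytic U F - U ^ 2) * hU

end Catalytic

namespace BT

section Tamari

theorem Rot.size_eq {T T' : BT} (h : Rot T T') : T.size = T'.size := by
  induction h with
  | rotate => simp only [size]; omega
  | left _ _ ih => simp only [size, ih]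
  | right _ _ ih => simp only [size, ih]

theorem tle.size_eq {T T' : BT} (h : tle T T') : T.size = T'.size := by
  induction h with
  | refl => rfl
  | tail _ h ih => exact ih.trans h.size_eq

theorem tle.node {L L' R R' : BT} (hL : tle L L') (hR : tle R R') : tle (node L R) (node L' R') :=
  (hL.lift (BT.node · R) fun _ _ => .left R).trans (hR.lift (BT.node L') fun _ _ => .right L')

/-- The number of nodes on the left branch, the path that descends from the root through left
children. -/
def leftLength : BT → ℕ
  | leaf => 0
  | node l _ => l.leftLength + 1

theorem leftLength_le_size : ∀ T : BT, T.leftLength ≤ T.size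
  | leaf => le_rfl
  | node l _ => Nat.succ_le_succ ((leftLength_le_size l).trans (Nat.le_add_right ..))

/-- `graft A q M` replaces the subtree `B` at depth `q` of the left branch of `M` by `node A B`.
A depth `q > M.leftLength` does not exist and is truncated to `M.leftLength`. -/
def graft (A : BT) : ℕ → BT → BT
  | 0, M => node A M
  | _ + 1, leaf => node A leaf
  | q + 1, node l r => node (graft A q l) r

theorem size_graft (A : BT) : ∀ (q : ℕ) (M : BT), (graft A q M).size = A.size + M.size + 1
  | 0, _ => rfl
  | _ + 1, leaf => rfl
  | q + 1, node l r => by simp only [graft, size, size_graft A q l]; omega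

theorem leftLength_graft (A : BT) : ∀ {q : ℕ} {M : BT}, q ≤ M.leftLength →
    (graft A q M).leftLength = A.leftLength + q + 1
  | 0, _, _ => rfl
  | q + 1, node l r, h => by
    simp only [graft, leftLength, leftLength_graft A (Nat.le_of_succ_le_succ h)]; omega

theorem graft_inj {A B : BT} (hAB : A.size = B.size) : ∀ {q q' : ℕ} {M M' : BT},
    q ≤ M.leftLength → q' ≤ M'.leftLength → graft A q M = graft B q' M' →
      A = B ∧ q = q' ∧ M = M'
  | 0, 0, M, M', _, _, h => by
    obtain ⟨rfl, rfl⟩ := node.inj h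
    exact ⟨rfl, rfl, rfl⟩
  | 0, q' + 1, M, node l r, _, _, h => by
    have := congrArg size (node.inj h).1
    rw [size_graft] at this; omega
  | q + 1, 0, node l r, M', _, _, h => by
    have := congrArg size (node.inj h).1
    rw [size_graft] at this; omega
  | q + 1, q' + 1, node l r, node l' r', hq, hq', h => by
    obtain ⟨hl, rfl⟩ := node.inj h
    obtain ⟨rfl, rfl, rfl⟩ :=
      graft_inj hAB (Nat.le_of_succ_le_succ hq) (Nat.le_of_succ_le_succ hq') hl
    exact ⟨rfl, rfl, rfl⟩

theorem tle_graft_node (A : BT) : ∀ (q : ℕ) (M : BT), tle (graft A q M) (node A M)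
  | 0, _ => .refl
  | _ + 1, leaf => .refl
  | q + 1, node l r => ((tle_graft_node A q l).node .refl).tail (.rotate A l r)

theorem exists_graft_of_rot {A Y : BT} {q : ℕ} {M : BT} (hq : q ≤ M.leftLength)
    (h : Rot Y (graft A q M)) :
    ∃ A₀ M₀ q₀, tle A₀ A ∧ tle M₀ M ∧ q₀ ≤ M₀.leftLength ∧ Y = graft A₀ q₀ M₀ := by
  induction q generalizing Y M with
  | zero =>
    cases h with
    | rotate _ B C => exact ⟨A, node B C, 1, .refl, .refl, Nat.le_add_left .., rfl⟩
    | left r h => exact ⟨_, M, 0, .single h, .refl, hq, rfl⟩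
    | right l h => exact ⟨A, _, 0, .refl, .single h, Nat.zero_le _, rfl⟩
  | succ q ih =>
    obtain _ | ⟨l, r⟩ := M
    · exact absurd hq (Nat.not_succ_le_zero q)
    have hql : q ≤ l.leftLength := Nat.le_of_succ_le_succ hq
    rw [graft] at h
    generalize hX : graft A q l = X at h
    cases h with
    | rotate _ B C =>
      exact ⟨A, node (node l B) C, q + 2, .refl, .single (.rotate l B C),
        Nat.succ_le_succ (Nat.succ_le_succ hql), by rw [graft, graft, hX]⟩
    | left r h =>
      subst hX
      obtain ⟨A₀, M₀, q₀, hA, hM, hq₀, rfl⟩ := ih hql h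
      exact ⟨A₀, node M₀ r, q₀ + 1, hA, hM.node .refl, Nat.succ_le_succ hq₀, rfl⟩
    | @right _ r _ h =>
      exact ⟨A, node l r, q + 1, .refl, .single (.right l h), hq, by rw [graft, hX]⟩

theorem tle_node_iff {X A' M' : BT} : tle X (node A' M') ↔
    ∃ A M q, tle A A' ∧ tle M M' ∧ q ≤ M.leftLength ∧ X = graft A q M := by
  constructor
  · intro h
    induction h using Relation.ReflTransGen.head_induction_on with
    | refl => exact ⟨A', M', 0, .refl, .refl, Nat.zero_le _, rfl⟩
    | head h _ ih =>
      obtain ⟨A, M, q, hA, hM, hq, rfl⟩ := ih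
      obtain ⟨A₀, M₀, q₀, hA₀, hM₀, hq₀, rfl⟩ := exists_graft_of_rot hq h
      exact ⟨A₀, M₀, q₀, hA₀.trans hA, hM₀.trans hM, hq₀, rfl⟩
  · rintro ⟨A, M, q, hA, hM, -, rfl⟩
    exact (tle_graft_node A q M).trans (hA.node hM)

end Tamari

section Canopy

theorem length_canopyAux : ∀ (T : BT) (b : ℕ), (canopyAux b T).length = T.size + 1
  | leaf, _ => rfl
  | node l r, _ => by
    simp only [canopyAux, List.length_append, length_canopyAux l, length_canopyAux r, size]; omega

theorem length_canopy (T : BT) : (canopy T).length = T.size + 1 := length_canopyAux T 1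

theorem exists_canopyAux_node_eq_cons (b : ℕ) :
    ∀ l r : BT, ∃ w, canopyAux b (node l r) = 1 :: w
  | leaf, _ => ⟨_, rfl⟩
  | node l₁ l₂, r => by
    obtain ⟨w, hw⟩ := exists_canopyAux_node_eq_cons 1 l₁ l₂
    exact ⟨w ++ canopyAux 0 r, by rw [canopyAux, hw]; rfl⟩

theorem canopyAux_zero_eq_iff {M N : BT} (h : M.size = N.size) :
    canopyAux 0 M = canopyAux 0 N ↔ canopy M = canopy N := by
  cases M <;> cases N <;> simp_all [size, canopyAux, canopy]

theorem append_canopyAux_eq_canopy_node_iff {A A' M M' : BT} (hA : A.size = A'.size)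
    (hM : M.size = M'.size) :
    canopy A ++ canopyAux 0 M = canopy (node A' M') ↔
      canopy A = canopy A' ∧ canopy M = canopy M' := by
  rw [← canopyAux_zero_eq_iff hM]
  refine ⟨fun h => List.append_inj h ?_, fun h => congrArg₂ _ h.1 h.2⟩
  rw [length_canopy, length_canopy, hA]

theorem canopy_graft (A : BT) : ∀ {q : ℕ} {M : BT}, q = 0 ∨ q < M.leftLength →
    canopy (graft A q M) = canopy A ++ canopyAux 0 M
  | 0, _, _ => rfl
  | q + 1, leaf, h => by simp [leftLength] at h
  | q + 1, node leaf r, h => by simp [leftLength] at h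
  | q + 1, node (node l₁ l₂) r, h => by
    have hq : q < (node l₁ l₂).leftLength := by simpa [leftLength] using h
    have ih := canopy_graft A (.inr hq)
    rw [canopy] at ih
    rw [graft, canopy, canopyAux, ih]
    exact List.append_assoc ..

theorem exists_canopy_graft_leftLength_eq (A : BT) :
    ∀ M : BT, ∃ w, canopy (graft A M.leftLength M) = canopy A ++ 0 :: w
  | leaf => ⟨[], rfl⟩
  | node l r => by
    obtain ⟨w, hw⟩ := exists_canopy_graft_leftLength_eq A l
    rw [canopy] at hw
    exact ⟨w ++ canopyAux 0 r, by simp [leftLength, graft, canopy, canopyAux, hw]⟩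

-- Grafting at the end of a nonempty left branch turns the leftmost leaf of `M` into a right child.
theorem canopy_graft_leftLength_ne {A M A' M' : BT} (hA : A.size = A'.size)
    (hM : M.size = M'.size) (hne : M.leftLength ≠ 0) :
    canopy (graft A M.leftLength M) ≠ canopy (node A' M') := by
  intro h
  obtain ⟨w, hw⟩ := exists_canopy_graft_leftLength_eq A M
  have h₀ : 0 :: w = canopyAux 0 M' :=
    (List.append_inj (hw.symm.trans h) (by rw [length_canopy, length_canopyAux, hA])).2
  obtain _ | ⟨l, r⟩ := M
  · exact hne rfl
  obtain _ | ⟨l', r'⟩ := M'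
  · simp [size] at hM
  obtain ⟨w', hw'⟩ := exists_canopyAux_node_eq_cons 0 l' r'
  simp [hw'] at h₀

end Canopy

section Sync

/-- The Tamari order restricted to pairs with the same canopy: `(T, T')` is a synchronized
interval. -/
def syncLE (T T' : BT) : Prop := tle T T' ∧ canopy T = canopy T'

theorem syncLE.size_eq {T T' : BT} (h : syncLE T T') : T.size = T'.size := h.1.size_eq

theorem syncLE_node_iff {X A' M' : BT} : syncLE X (node A' M') ↔
    ∃ A M q, syncLE A A' ∧ syncLE M M' ∧ (q = 0 ∨ q < M.leftLength) ∧ X = graft A q M := by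
  constructor
  · rintro ⟨hX, hcanopy⟩
    obtain ⟨A, M, q, hA, hM, hq, rfl⟩ := tle_node_iff.1 hX
    have hq' : q = 0 ∨ q < M.leftLength := by
      by_contra! hq'
      obtain rfl := hq.antisymm hq'.2
      exact canopy_graft_leftLength_ne hA.size_eq hM.size_eq hq'.1 hcanopy
    rw [canopy_graft A hq', append_canopyAux_eq_canopy_node_iff hA.size_eq hM.size_eq] at hcanopy
    exact ⟨A, M, q, ⟨hA, hcanopy.1⟩, ⟨hM, hcanopy.2⟩, hq', rfl⟩
  · rintro ⟨A, M, q, hA, hM, hq, rfl⟩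
    refine ⟨tle_node_iff.2 ⟨A, M, q, hA.1, hM.1, by omega, rfl⟩, ?_⟩
    rw [canopy_graft A hq, append_canopyAux_eq_canopy_node_iff hA.size_eq hM.size_eq]
    exact ⟨hA.2, hM.2⟩

end Sync

section Mirror

theorem mir_mir : ∀ T : BT, mir (mir T) = T
  | leaf => rfl
  | node l r => by rw [mir, mir, mir_mir l, mir_mir r]

theorem mir_involutive : Function.Involutive mir := mir_mir

theorem size_mir : ∀ T : BT, (mir T).size = T.size
  | leaf => rfl
  | node l r => by rw [mir, size, size_mir l, size_mir r, Nat.add_comm r.size, size]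

theorem Rot.mir {T T' : BT} (h : Rot T T') : Rot T'.mir T.mir := by
  induction h with
  | rotate A B C => exact .rotate _ _ _
  | left r _ ih => exact .right _ ih
  | right l _ ih => exact .left _ ih

theorem tle.mir {T T' : BT} (h : tle T T') : tle T'.mir T.mir := by
  induction h with
  | refl => exact .refl
  | tail _ h ih => exact .head h.mir ih

theorem canopyAux_mir : ∀ (T : BT) {b : ℕ}, b ≤ 1 →
    canopyAux (1 - b) (mir T) = ((canopyAux b T).map (1 - ·)).reverse
  | leaf, _, _ => rfl
  | node l r, _, _ => by
    simp only [mir, canopyAux, List.map_append, List.reverse_append]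
    rw [← canopyAux_mir l le_rfl, ← canopyAux_mir r zero_le_one, Nat.sub_self, Nat.sub_zero]

theorem canopy_mir_eq {T T' : BT} (hsize : T.size = T'.size) (h : canopy T = canopy T') :
    canopy T'.mir = canopy T.mir := by
  have h₀ := (canopyAux_zero_eq_iff hsize).2 h
  exact (canopyAux_mir T' zero_le_one).trans (h₀ ▸ (canopyAux_mir T zero_le_one).symm)

theorem syncLE.mir {T T' : BT} (h : syncLE T T') : syncLE T'.mir T.mir :=
  ⟨h.1.mir, canopy_mir_eq h.size_eq h.2⟩

theorem syncLE_mir_comm {T T' : BT} : syncLE T (mir T') ↔ syncLE T' (mir T) :=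
  ⟨fun h => mir_mir T' ▸ h.mir, fun h => mir_mir T ▸ h.mir⟩

theorem syncLE_mir_self_node_iff {L R : BT} : syncLE (node L R) (mir (node L R)) ↔
    syncLE L (mir R) ∨
      ∃ A M q, syncLE A (mir R) ∧ syncLE M (mir M) ∧ q < M.leftLength ∧ L = graft A q M := by
  rw [mir, syncLE_node_iff]
  constructor
  · rintro ⟨A, N, q, hA, hN, hq, h⟩
    cases q with
    | zero => exact .inl ((node.inj h).1 ▸ hA)
    | succ q =>
      obtain _ | ⟨M, R'⟩ := N
      · simp [leftLength] at hq
      obtain ⟨hL, rfl⟩ := node.inj h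
      have hqM : q < M.leftLength := by simpa [leftLength] using hq
      obtain ⟨A', M', q', hA', hM', hq', hL'⟩ := syncLE_node_iff.1 (syncLE_mir_comm.1 hN)
      obtain ⟨rfl, rfl, rfl⟩ := graft_inj (hA.size_eq.trans hA'.size_eq.symm) hqM.le (by omega)
        (hL.symm.trans hL')
      exact .inr ⟨A, M, q, hA, hM', hqM, hL⟩
  · rintro (h | ⟨A, M, q, hA, hM, hq, rfl⟩)
    · exact ⟨L, R, 0, h, syncLE_mir_comm.1 h, .inl rfl, rfl⟩
    · refine ⟨A, node M R, q + 1, hA, syncLE_mir_comm.1 ?_, .inr (Nat.succ_lt_succ hq), rfl⟩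
      exact syncLE_node_iff.2 ⟨A, M, q, hA, hM, .inr hq, rfl⟩

theorem odd_size_of_syncLE_mir_self {T : BT} (hT : T ≠ leaf) (h : syncLE T (mir T)) :
    Odd T.size := by
  induction hn : T.size using Nat.strong_induction_on generalizing T with
  | _ n ih =>
    subst hn
    obtain _ | ⟨L, R⟩ := T
    · exact absurd rfl hT
    rcases syncLE_mir_self_node_iff.1 h with hL | ⟨A, M, q, hA, hM, hq, rfl⟩
    · exact ⟨R.size, by rw [size, hL.size_eq, size_mir, two_mul]⟩
    · have hsize : (node (graft A q M) R).size = M.size + 2 * (R.size + 1) := by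
        rw [size, size_graft, hA.size_eq, size_mir]; ring
      have hM₀ : M ≠ leaf := fun h => by simp [h, leftLength] at hq
      rw [hsize]
      exact (ih M.size (by omega) hM₀ hM rfl).add_even (even_two_mul _)

end Mirror

theorem finite_setOf_size_le (n : ℕ) : {T : BT | T.size ≤ n}.Finite := by
  induction n with
  | zero =>
    refine (Set.finite_singleton leaf).subset fun T hT => ?_
    cases T with
    | leaf => rfl
    | node l r => exact absurd hT (Nat.not_succ_le_zero _)
  | succ n ih =>
    refine ((ih.image2 node ih).insert leaf).subset fun T (hT : T.size ≤ n + 1) => ?_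
    cases T with
    | leaf => exact .inl rfl
    | node l r =>
      simp only [size] at hT
      exact .inr ⟨l, show l.size ≤ n by omega, r, show r.size ≤ n by omega, rfl⟩

theorem finiteFibers_size : FiniteFibers size := fun n =>
  (finite_setOf_size_le n).subset fun _ => le_of_eq

/-- The class of synchronized intervals, as pairs (lower tree, upper tree). -/
abbrev SyncInterval : Type := {p : BT × BT // syncLE p.1 p.2}

namespace SyncInterval

/-- The common size of the two trees of a synchronized interval, read off the lower one. -/
def size (I : SyncInterval) : ℕ := I.1.1.size

/-- The catalytic statistic of a synchronized interval: the length of the left branch of the lower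
tree. -/
def leftLength (I : SyncInterval) : ℕ := I.1.1.leftLength

theorem finiteFibers_size : FiniteFibers size := fun n => by
  refine (((BT.finiteFibers_size n).prod (BT.finiteFibers_size n)).preimage
    Subtype.val_injective.injOn).subset fun I (hI : I.1.1.size = n) => ?_
  exact ⟨hI, I.2.size_eq.symm.trans hI⟩

/-- The decomposition of synchronized intervals read backwards: an interval other than the pair of
leaves is obtained by grafting an interval either to the pair of leaves or to an interval `J`, at a
depth smaller than the length of the left branch of `J`. -/
def assemble :
    Unit ⊕ SyncInterval × (Unit ⊕ Σ J : SyncInterval, Fin J.leftLength) → SyncInterval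
  | .inl _ => ⟨(leaf, leaf), .refl, rfl⟩
  | .inr (I, .inl _) => ⟨(node I.1.1 leaf, node I.1.2 leaf),
      syncLE_node_iff.2 ⟨I.1.1, leaf, 0, I.2, ⟨.refl, rfl⟩, .inl rfl, rfl⟩⟩
  | .inr (I, .inr ⟨J, q⟩) => ⟨(graft I.1.1 q J.1.1, node I.1.2 J.1.2),
      syncLE_node_iff.2 ⟨I.1.1, J.1.1, q, I.2, J.2, .inr q.2, rfl⟩⟩

theorem assemble_injective : Function.Injective assemble := by
  rintro (_ | ⟨⟨⟨A, A'⟩, hA⟩, _ | ⟨⟨⟨M, M'⟩, hM⟩, q, hq⟩⟩)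
    (_ | ⟨⟨⟨B, B'⟩, hB⟩, _ | ⟨⟨⟨N, N'⟩, hN⟩, r, hr⟩⟩) h <;>
    obtain ⟨hlower, hupper⟩ := Prod.mk.inj (Subtype.mk.inj h)
  · rfl
  · cases hupper
  · cases hupper
  · cases hupper
  · cases hlower
    cases hupper
    rfl
  · cases hupper
    exact absurd (hr.trans_le (leftLength_le_size N)) (hN.size_eq ▸ Nat.not_lt_zero r)
  · cases hupper
  · cases hupper
    exact absurd (hq.trans_le (leftLength_le_size M)) (hM.size_eq ▸ Nat.not_lt_zero q)
  · cases hupper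
    obtain ⟨rfl, rfl, rfl⟩ :=
      graft_inj (hA.size_eq.trans hB.size_eq.symm) (Nat.le_of_lt hq) (Nat.le_of_lt hr) hlower
    rfl

theorem assemble_surjective : Function.Surjective assemble := by
  rintro ⟨⟨X, _ | ⟨A', M'⟩⟩, h⟩
  · obtain _ | ⟨l, r⟩ := X
    · exact ⟨.inl (), rfl⟩
    · exact absurd h.size_eq (Nat.succ_ne_zero _)
  · obtain ⟨A, M, q, hA, hM, hq, rfl⟩ := syncLE_node_iff.1 h
    rcases lt_or_ge q M.leftLength with hqM | hqM
    · exact ⟨.inr (⟨(A, A'), hA⟩, .inr ⟨⟨(M, M'), hM⟩, q, hqM⟩), rfl⟩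
    · obtain rfl : q = 0 := by omega
      obtain _ | ⟨l, r⟩ := M
      · obtain _ | ⟨l', r'⟩ := M'
        · exact ⟨.inr (⟨(A, A'), hA⟩, .inl ()), rfl⟩
        · exact absurd hM.size_eq (Nat.succ_ne_zero _).symm
      · exact absurd hqM (Nat.not_succ_le_zero _)

theorem size_assemble (x) : (assemble x).size =
    Sum.elim (fun _ => 0)
      (fun y => size y.1 + Sum.elim (fun _ => 0) (fun z => size z.1) y.2 + 1) x := by
  rcases x with _ | ⟨I, _ | ⟨J, q⟩⟩
  · rfl
  · rfl
  · exact size_graft ..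

theorem pow_leftLength_assemble {R : Type*} [CommSemiring R] (u : R) (x) :
    u ^ (assemble x).leftLength =
    Sum.elim (fun _ => 1)
      (fun y => u * (u ^ leftLength y.1 *
        Sum.elim (fun _ => 1) (fun z => u ^ (z.2 : ℕ)) y.2)) x := by
  rcases x with _ | ⟨I, _ | ⟨J, q⟩⟩
  · exact pow_zero u
  · exact (pow_succ' u _).trans (by rw [Sum.elim_inr, Sum.elim_inl, mul_one]; rfl)
  · simp only [Sum.elim_inr, assemble, leftLength, leftLength_graft I.1.1 q.2.le]
    ring

variable {R : Type*} [CommRing R]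

/-- The generating function of synchronized intervals by size, in which the length of the left
branch of the lower tree is counted by powers of `u`. -/
noncomputable def series (u : R) : R⟦X⟧ := genFun size fun I => u ^ I.leftLength

theorem series_map {S : Type*} [CommRing S] (f : R →+* S) (u : R) :
    (series u).map f = series (f u) := by
  rw [series, genFun_map finiteFibers_size]
  simp only [map_pow, series]

theorem sub_one_mul_series_sub_one (u : R) :
    (C u - 1) * (series u - 1) =
      X * C u * series u * (C u - 1 + series u - series (1 : R)) := by
  set E := genFun (fun z : Σ J : SyncInterval, Fin J.leftLength => size z.1) fun z => u ^ (z.2 : ℕ)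
  have hE : (C u - 1) * E = series u - series 1 := by
    simpa only [series, one_pow] using sub_one_mul_genFun_sigma_fin finiteFibers_size leftLength u
  have hW : series u = 1 + X * (C u * (series u * (1 + E))) := by
    have hUnit : FiniteFibers fun _ : Unit => 0 := .of_finite _
    have hJ := finiteFibers_size.sigma (γ := fun J : SyncInterval => Fin J.leftLength)
    have hN := hUnit.sum hJ
    have hIN := finiteFibers_size.prod hN
    calc
      series u = _ := genFun_eq_of_bijective assemble ⟨assemble_injective, assemble_surjective⟩
        size_assemble (pow_leftLength_assemble u)
      _ = _ := by
        rw [genFun_sum hUnit hIN.add_one, genFun_unique, genFun_add_one,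
          genFun_C_mul hIN, genFun_prod finiteFibers_size hN (fun I => u ^ leftLength I),
          genFun_sum hUnit hJ, genFun_unique, map_one, series]
  linear_combination (C u - 1) * hW + X * C u * series u * hE

end SyncInterval

/-- The class of self-dual synchronized intervals other than the pair of leaves, encoded by their
lower trees. -/
abbrev SelfDualTree : Type := {T : BT // T ≠ leaf ∧ syncLE T (mir T)}

namespace SelfDualTree

/-- The number `k` such that the tree has size `2 * k + 1`; see `size_eq`. -/
def halfSize (T : SelfDualTree) : ℕ := T.1.size / 2

/-- The catalytic statistic of a self-dual synchronized interval: the length of the left branch of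
the lower tree. -/
def leftLength (T : SelfDualTree) : ℕ := T.1.leftLength

theorem size_eq (T : SelfDualTree) : T.1.size = 2 * T.halfSize + 1 :=
  (Nat.two_mul_div_two_add_one_of_odd (odd_size_of_syncLE_mir_self T.2.1 T.2.2)).symm

theorem finiteFibers_halfSize : FiniteFibers halfSize := fun n =>
  ((finite_setOf_size_le (2 * n + 1)).preimage Subtype.val_injective.injOn).subset
    fun (T : SelfDualTree) (hT : T.halfSize = n) => (hT ▸ T.size_eq).le

/-- The decomposition of self-dual synchronized intervals read backwards: such an interval is
obtained from a synchronized interval `I` by joining its lower tree to the mirror of its upper tree,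
possibly after grafting the lower tree to a smaller self-dual interval. -/
def assemble :
    SyncInterval × (Unit ⊕ Σ M : SelfDualTree, Fin M.leftLength) → SelfDualTree
  | (I, .inl _) => ⟨node I.1.1 (mir I.1.2), nofun,
      syncLE_mir_self_node_iff.2 (.inl ((mir_mir I.1.2).symm ▸ I.2))⟩
  | (I, .inr ⟨M, q⟩) => ⟨node (graft I.1.1 q M.1) (mir I.1.2), nofun,
      syncLE_mir_self_node_iff.2
        (.inr ⟨I.1.1, M.1, q, (mir_mir I.1.2).symm ▸ I.2, M.2.2, q.2, rfl⟩)⟩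

theorem assemble_injective : Function.Injective assemble := by
  have size_graft_ne {A B M : BT} {q : ℕ} (h : A.size = B.size) : A ≠ graft B q M := by
    rintro rfl
    rw [size_graft] at h
    omega
  rintro ⟨⟨⟨A, A'⟩, hA⟩, _ | ⟨⟨M, hM⟩, q, hq⟩⟩ ⟨⟨⟨B, B'⟩, hB⟩, _ | ⟨⟨N, hN⟩, r, hr⟩⟩ h <;>
    obtain ⟨hL, hR⟩ := node.inj (Subtype.mk.inj h) <;>
    obtain rfl : A' = B' := mir_involutive.injective hR <;>
    have hAB : A.size = B.size := hA.size_eq.trans hB.size_eq.symm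
  · cases hL
    rfl
  · exact absurd hL (size_graft_ne hAB)
  · exact absurd hL.symm (size_graft_ne hAB.symm)
  · obtain ⟨rfl, rfl, rfl⟩ := graft_inj hAB (Nat.le_of_lt hq) (Nat.le_of_lt hr) hL
    rfl

theorem assemble_surjective : Function.Surjective assemble := by
  rintro ⟨_ | ⟨L, R⟩, hT, h⟩
  · exact absurd rfl hT
  · rcases syncLE_mir_self_node_iff.1 h with hL | ⟨A, M, q, hA, hM, hq, rfl⟩
    · exact ⟨(⟨(L, mir R), hL⟩, .inl ()), Subtype.ext (congrArg (node L) (mir_mir R))⟩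
    · have hM₀ : M ≠ leaf := fun h => by simp [h, BT.leftLength] at hq
      exact ⟨(⟨(A, mir R), hA⟩, .inr ⟨⟨M, hM₀, hM⟩, q, hq⟩),
        Subtype.ext (congrArg (node _) (mir_mir R))⟩

theorem halfSize_assemble (x) : (assemble x).halfSize =
    x.1.size + Sum.elim (fun _ => 0) (fun z => halfSize z.1 + 1) x.2 := by
  rcases x with ⟨I, _ | ⟨M, q⟩⟩ <;>
    have hI := I.2.size_eq <;>
    simp only [assemble, halfSize, SyncInterval.size, BT.size, size_graft, size_mir, Sum.elim_inl,
      Sum.elim_inr] <;>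
    omega

theorem pow_leftLength_assemble {R : Type*} [CommSemiring R] (u : R) (x) :
    u ^ (assemble x).leftLength =
      u * (u ^ x.1.leftLength *
        Sum.elim (fun _ => 1) (fun z => u * u ^ (z.2 : ℕ)) x.2) := by
  rcases x with ⟨I, _ | ⟨M, q⟩⟩
  · exact (pow_succ' u _).trans (by rw [Sum.elim_inl, mul_one]; rfl)
  · simp only [Sum.elim_inr, assemble, leftLength, BT.leftLength, SyncInterval.leftLength,
      leftLength_graft I.1.1 q.2.le]
    ring

variable {R : Type*} [CommRing R]

/-- The generating function of self-dual synchronized intervals by half-size, in which the length of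
the left branch of the lower tree is counted by powers of `u`. -/
noncomputable def series (u : R) : R⟦X⟧ := genFun halfSize fun T => u ^ T.leftLength

theorem series_map {S : Type*} [CommRing S] (f : R →+* S) (u : R) :
    (series u).map f = series (f u) := by
  rw [series, genFun_map finiteFibers_halfSize]
  simp only [map_pow, series]

theorem sub_one_mul_series (u : R) :
    (C u - 1) * series u = C u * (C u - 1) * SyncInterval.series u +
      X * C u ^ 2 * SyncInterval.series u * (series u - series (1 : R)) := by
  set E := genFun (fun z : Σ M : SelfDualTree, Fin M.leftLength => halfSize z.1)
    fun z => u ^ (z.2 : ℕ)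
  have hE : (C u - 1) * E = series u - series 1 := by
    simpa only [series, one_pow] using
      sub_one_mul_genFun_sigma_fin finiteFibers_halfSize leftLength u
  have hF : series u = C u * (SyncInterval.series u * (1 + X * (C u * E))) := by
    have hUnit : FiniteFibers fun _ : Unit => 0 := .of_finite _
    have hI := SyncInterval.finiteFibers_size
    have hM := finiteFibers_halfSize.sigma (γ := fun M : SelfDualTree => Fin M.leftLength)
    have hN := hUnit.sum hM.add_one
    calc
      series u = _ := genFun_eq_of_bijective assemble ⟨assemble_injective, assemble_surjective⟩
        halfSize_assemble (pow_leftLength_assemble u)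
      _ = _ := by
        rw [genFun_C_mul (hI.prod hN), genFun_prod hI hN (fun I => u ^ I.leftLength),
          genFun_sum hUnit hM.add_one, genFun_unique, genFun_add_one, genFun_C_mul hM,
          map_one, SyncInterval.series]
  linear_combination (C u - 1) * hF + X * C u ^ 2 * SyncInterval.series u * hE

theorem succ_mul_ncard_halfSize_eq (k : ℕ) :
    (k + 1) * (halfSize ⁻¹' {k}).ncard = (3 * k + 1).choose k := by
  have hW := SyncInterval.sub_one_mul_series_sub_one (Polynomial.X : ℤ[X])
  have hF := sub_one_mul_series (Polynomial.X : ℤ[X])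
  rw [← map_one Polynomial.C, ← SyncInterval.series_map] at hW
  rw [← map_one Polynomial.C, ← series_map] at hF
  obtain ⟨U, hU, hWU⟩ := exists_eq_one_add_X_mul_cube_of_catalytic hW
  have hcoeff := succ_mul_coeff_sq_of_eq_one_add_X_mul_cube hU k
  rw [← eq_sq_of_catalytic hU hWU hF, series] at hcoeff
  simp only [one_pow, coeff_genFun_one finiteFibers_halfSize] at hcoeff
  exact_mod_cast hcoeff

end SelfDualTree

theorem interval_and_synced_and_selfDual_iff {p : BT × BT} {n : ℕ} :
    interval p n ∧ synced p ∧ selfDual p ↔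
      p.1.size = n ∧ syncLE p.1 (mir p.1) ∧ p.2 = mir p.1 := by
  obtain ⟨T, T'⟩ := p
  constructor
  · rintro ⟨⟨hsize, -, hle⟩, hcanopy, -, rfl : mir T = T'⟩
    exact ⟨hsize, ⟨hle, hcanopy⟩, rfl⟩
  · rintro ⟨hsize, h, rfl : T' = mir T⟩
    exact ⟨⟨hsize, (size_mir T).trans hsize, h.1⟩, h.2, mir_mir T, rfl⟩

end BT

theorem count_self_dual_synchronized_intervals (k : ℕ) :
    (1 ≤ k →
      {p : BT × BT | BT.interval p (2 * k) ∧ BT.synced p ∧ BT.selfDual p} = (∅ : Set (BT × BT))) ∧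
    (k + 1) *
        Set.ncard {p : BT × BT | BT.interval p (2 * k + 1) ∧ BT.synced p ∧ BT.selfDual p} =
      Nat.choose (3 * k + 1) k := by
  simp only [BT.interval_and_synced_and_selfDual_iff]
  refine ⟨fun hk => ?_, ?_⟩
  · refine Set.eq_empty_of_forall_notMem fun p ⟨hsize, h, _⟩ => ?_
    have hleaf : p.1 ≠ .leaf := fun hp => by rw [hp, BT.size] at hsize; omega
    have hodd := BT.odd_size_of_syncLE_mir_self hleaf h
    exact Nat.not_even_iff_odd.2 hodd (hsize ▸ even_two_mul k)
  · have himage : {p : BT × BT | p.1.size = 2 * k + 1 ∧ BT.syncLE p.1 p.1.mir ∧ p.2 = p.1.mir} =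
        (fun T : BT.SelfDualTree => (T.1, T.1.mir)) '' (BT.SelfDualTree.halfSize ⁻¹' {k}) := by
      ext ⟨T, T'⟩
      constructor
      · rintro ⟨hsize, h, rfl : T' = T.mir⟩
        refine ⟨⟨T, fun hT => by simp [hT, BT.size] at hsize, h⟩, ?_, rfl⟩
        exact show T.size / 2 = k by rw [show T.size = 2 * k + 1 from hsize]; omega
      · rintro ⟨T, rfl, ⟨⟩⟩
        exact ⟨T.size_eq, T.2.2, rfl⟩
    rw [himage, Set.ncard_image_of_injective _ fun T S h => Subtype.ext (Prod.mk.inj h).1,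
      BT.SelfDualTree.succ_mul_ncard_halfSize_eq]
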